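/- Let G be a finite group generated by an involution s and an element x with ord(x) > 2, and assume s ∉ ⟨s·x⟩. Then the Cayley graph Cay(G, {s, x, x⁻¹}) admits a cycle double cover consisting of: for each left coset g⟨x⟩ the cycle (g, g·x, g·x², …, g·x^{ord(x)−1}) of length ord(x), and for each g ∈ G the alternating cycle of length 2·ord(s·x) whose vertices are g·(sx)^k and g·(sx)^k·s for 0 ≤ k < ord(s·x), traversed in the order g, g·s, g·s·x, g·s·x·s, … (each such alternating cycle is counted once). Every edge of Cay(G, {s, x, x⁻¹}) lies on exactly two of these cycles. -/

import Mathlib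

/-- The Cayley graph `Cay(G,S)` (for a symmetric subset `S` with `1 ∉ S`): distinct
`x, y` are adjacent iff `x⁻¹ * y ∈ S`. -/
def cayleyGraph (G : Type*) [Group G] (S : Set G) : SimpleGraph G :=
  SimpleGraph.fromRel fun x y => x⁻¹ * y ∈ S

/-- The edges of a vertex list regarded as a closed cyclic sequence. -/
def cycleEdges {V : Type*} (l : List V) : List (Sym2 V) :=
  List.zipWith (fun a b => s(a, b)) l (l.rotate 1)

/-- `l` is a cycle of `Γ`: at least three pairwise distinct vertices, any two cyclically
consecutive ones being adjacent in `Γ`. -/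
def IsCycleList {V : Type*} (Γ : SimpleGraph V) (l : List V) : Prop :=
  3 ≤ l.length ∧ l.Nodup ∧ ∀ e ∈ cycleEdges l, e ∈ Γ.edgeSet

open scoped Classical in
/-- A cycle double cover: a family of cycles, counted with multiplicity, such that every
edge of `Γ` lies on exactly two members of the family. -/
def IsCycleDoubleCover {V : Type*} (Γ : SimpleGraph V) (cs : Multiset (List V)) : Prop :=
  (∀ l ∈ cs, IsCycleList Γ l) ∧
  ∀ e ∈ Γ.edgeSet, (cs.map fun l => if e ∈ cycleEdges l then 1 else 0).sum = 2

open scoped Classical in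
/-- The explicit cycle double cover of `Cay(G, {s,x,x⁻¹})`: for each left coset `g⟨x⟩`
the cycle `(g, g·x, …, g·x^{ord(x)-1})` of length `ord(x)`, and for each alternating
cycle (one per left coset of `⟨s·x⟩`, so that each such cycle is counted once) the cycle
`(g, g·s, g·s·x, g·s·x·s, …)` of length `2·ord(s·x)` with vertices `g·(sx)^k` and
`g·(sx)^k·s`. -/
noncomputable def cayleyCDC (G : Type*) [Group G] [Fintype G] (s x : G) :
    Multiset (List G) :=
  (Finset.univ : Finset (G ⧸ Subgroup.zpowers x)).val.map
    (fun q => (List.range (orderOf x)).map fun k => q.out * x ^ k) +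
  (Finset.univ : Finset (G ⧸ Subgroup.zpowers (s * x))).val.map
    (fun q => (List.range (orderOf (s * x))).flatMap fun k =>
      [q.out * (s * x) ^ k, q.out * (s * x) ^ k * s])

open scoped Classical in
theorem aux_mem_cycleEdges {V : Type*} (n : ℕ) (f : ℕ → V) (hf : f n = f 0) (e : Sym2 V) :
    e ∈ cycleEdges ((List.range n).map f) ↔ ∃ k < n, e = s(f k, f (k + 1)) := by
  unfold cycleEdges
  rw [List.mem_iff_getElem]
  have key : ∀ k, k < n → f ((k + 1) % n) = f (k + 1) := by
    intro k hk
    rcases Nat.lt_or_ge (k + 1) n with h | h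
    · rw [Nat.mod_eq_of_lt h]
    · have : k + 1 = n := by omega
      rw [this, Nat.mod_self, hf]
  constructor
  · rintro ⟨k, hk, rfl⟩
    have hk' : k < n := by simpa using hk
    refine ⟨k, hk', ?_⟩
    simp [List.getElem_rotate, key k hk']
  · rintro ⟨k, hk, rfl⟩
    refine ⟨k, by simpa using hk, ?_⟩
    simp [List.getElem_rotate, key k hk]

theorem aux_flat {V : Type*} (a b : ℕ → V) (n : ℕ) :
    (List.range n).flatMap (fun k => [a k, b k]) =
      (List.range (2 * n)).map (fun i => if i % 2 = 0 then a (i / 2) else b (i / 2)) := by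
  induction n with
  | zero => simp
  | succ n ih =>
    have h1 : (2 * n + 1) % 2 = 1 := by omega
    have h2 : (2 * n + 1) / 2 = n := by omega
    rw [List.range_succ, List.flatMap_append, ih, show 2 * (n + 1) = 2 * n + 1 + 1 by ring,
      List.range_succ, List.range_succ]
    simp [h1, h2]

theorem aux_coset {G : Type*} [Group G] [Fintype G] (y : G) (q : G ⧸ Subgroup.zpowers y) (a : G) :
    (a : G ⧸ Subgroup.zpowers y) = q ↔ ∃ k < orderOf y, q.out * y ^ k = a := by
  classical
  conv_lhs => rw [← QuotientGroup.out_eq' q, eq_comm, QuotientGroup.eq]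
  rw [← mem_powers_iff_mem_zpowers, mem_powers_iff_mem_range_orderOf]
  simp only [Finset.mem_image, Finset.mem_range]
  constructor
  · rintro ⟨k, hk, h⟩
    exact ⟨k, hk, by rw [h]; group⟩
  · rintro ⟨k, hk, h⟩
    exact ⟨k, hk, by rw [← h]; group⟩

theorem aux_x_edges {G : Type*} [Group G] [Fintype G] (x : G) (q : G ⧸ Subgroup.zpowers x)
    (e : Sym2 G) :
    e ∈ cycleEdges ((List.range (orderOf x)).map fun k => q.out * x ^ k) ↔
      ∃ a : G, (a : G ⧸ Subgroup.zpowers x) = q ∧ e = s(a, a * x) := by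
  rw [aux_mem_cycleEdges _ _ (by simp [pow_orderOf_eq_one])]
  simp only [aux_coset]
  constructor
  · rintro ⟨k, hk, rfl⟩
    exact ⟨_, ⟨k, hk, rfl⟩, by rw [pow_succ, mul_assoc]⟩
  · rintro ⟨_, ⟨k, hk, rfl⟩, rfl⟩
    exact ⟨k, hk, by rw [pow_succ, mul_assoc]⟩

theorem aux_alt_edges {G : Type*} [Group G] [Fintype G] (s x : G)
    (q : G ⧸ Subgroup.zpowers (s * x)) (e : Sym2 G) :
    e ∈ cycleEdges ((List.range (orderOf (s * x))).flatMap fun k =>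
      [q.out * (s * x) ^ k, q.out * (s * x) ^ k * s]) ↔
      ∃ a : G, (a : G ⧸ Subgroup.zpowers (s * x)) = q ∧
        (e = s(a, a * s) ∨ e = s(a * s, a * s * x)) := by
  rw [aux_flat, aux_mem_cycleEdges _ _ (by simp [pow_orderOf_eq_one])]
  simp only [aux_coset]
  have h1 (k : ℕ) : (2 * k + 1) % 2 = 1 := by omega
  have h2 (k : ℕ) : (2 * k + 1) / 2 = k := by omega
  have h3 (k : ℕ) : (2 * k + 1 + 1) % 2 = 0 := by omega
  have h4 (k : ℕ) : (2 * k + 1 + 1) / 2 = k + 1 := by omega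
  have h5 (k : ℕ) : q.out * (s * x) ^ (k + 1) = q.out * (s * x) ^ k * s * x := by
    rw [pow_succ]; group
  constructor
  · rintro ⟨i, hi, rfl⟩
    refine ⟨_, ⟨i / 2, by omega, rfl⟩, ?_⟩
    obtain ⟨k, rfl | rfl⟩ : ∃ k, i = 2 * k ∨ i = 2 * k + 1 := ⟨i / 2, by omega⟩
    · left
      simp [h1, h2]
    · right
      simp only [h1, h2, h3, h4, h5]
      simp
  · rintro ⟨_, ⟨k, hk, rfl⟩, rfl | rfl⟩
    · refine ⟨2 * k, by omega, ?_⟩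
      simp [h1, h2]
    · refine ⟨2 * k + 1, by omega, ?_⟩
      simp only [h1, h2, h3, h4, h5]
      simp

/-- Let `G` be finite, generated by an involution `s` and an element `x` of order
greater than `2`, with `s ∉ ⟨s·x⟩`. Then the family `cayleyCDC G s x` is a cycle double
cover of `Cay(G, {s,x,x⁻¹})`: every edge lies on exactly two of its cycles. -/
theorem cayleyCDC_isCycleDoubleCover
    (G : Type*) [Group G] [Fintype G] (s x : G)
    (hs : orderOf s = 2) (hx : 2 < orderOf x)
    (hgen : Subgroup.closure {s, x} = ⊤)
    (hsx : s ∉ Subgroup.zpowers (s * x)) :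
    IsCycleDoubleCover (cayleyGraph G {s, x, x⁻¹}) (cayleyCDC G s x) := by
  classical
  have hss : s * s = 1 := by rw [← pow_two, ← hs, pow_orderOf_eq_one]
  have hs1 : s ≠ 1 := by rintro rfl; simp at hs
  have hx1 : x ≠ 1 := by rintro rfl; simp at hx
  have hsx' : s ≠ x := by rintro rfl; omega
  have hxs : x * s ≠ 1 := by
    intro h
    apply hsx'
    calc s = x * s * s := by rw [h, one_mul]
      _ = x := by rw [mul_assoc, hss, mul_one]
  have hxx : x * x ≠ 1 := by
    intro h
    have := orderOf_le_of_pow_eq_one (x := x) (n := 2) (by norm_num) (by rw [pow_two, h])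
    omega
  have hsx1 : s * x ≠ 1 := by
    intro h
    apply hsx'
    calc s = s * (s * x) := by rw [h, mul_one]
      _ = x := by rw [← mul_assoc, hss, one_mul]
  have has (a : G) : a * s * s = a := by rw [mul_assoc, hss, mul_one]
  -- adjacency
  have adj_s (a : G) : s(a, a * s) ∈ (cayleyGraph G {s, x, x⁻¹}).edgeSet := by
    simp [cayleyGraph, hs1]
  have adj_x (a : G) : s(a, a * x) ∈ (cayleyGraph G {s, x, x⁻¹}).edgeSet := by
    simp [cayleyGraph, hx1]
  have edge_cases (e : Sym2 G) (he : e ∈ (cayleyGraph G {s, x, x⁻¹}).edgeSet) :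
      ∃ h : G, e = s(h, h * s) ∨ e = s(h, h * x) := by
    induction e with
    | _ a b =>
    have key : ∀ a b : G, a⁻¹ * b ∈ ({s, x, x⁻¹} : Set G) →
        ∃ h : G, s(a, b) = s(h, h * s) ∨ s(a, b) = s(h, h * x) := by
      intro a b hab
      rcases hab with h | h | h
      · exact ⟨a, Or.inl (by rw [← h]; simp)⟩
      · exact ⟨a, Or.inr (by rw [← h]; simp)⟩
      · refine ⟨b, Or.inr ?_⟩
        have h' : a⁻¹ * b = x⁻¹ := h
        have : x = b⁻¹ * a := by
          rw [← inv_inv x, ← h']; group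
        rw [this, Sym2.eq_swap]; simp
    rw [SimpleGraph.mem_edgeSet, cayleyGraph, SimpleGraph.fromRel_adj] at he
    rcases he.2 with h | h
    · exact key a b h
    · rw [Sym2.eq_swap]; exact key b a h
  -- edge comparisons
  have c1 (h a : G) : s(h, h * s) ≠ s(a, a * x) := by
    intro hh
    rcases Sym2.eq_iff.mp hh with ⟨rfl, h2⟩ | ⟨rfl, h2⟩
    · exact hsx' (mul_left_cancel h2)
    · rw [mul_assoc] at h2; exact hxs (mul_eq_left.mp h2)
  have c2 (h a : G) : s(h, h * s) = s(a, a * s) ↔ a = h ∨ a = h * s := by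
    constructor
    · intro hh
      rcases Sym2.eq_iff.mp hh with ⟨rfl, h2⟩ | ⟨rfl, h2⟩
      · exact Or.inl rfl
      · exact Or.inr h2.symm
    · rintro (rfl | rfl)
      · rfl
      · rw [has, Sym2.eq_swap]
  have c3 (h a : G) : s(h, h * x) = s(a, a * x) ↔ a = h := by
    constructor
    · intro hh
      rcases Sym2.eq_iff.mp hh with ⟨rfl, h2⟩ | ⟨rfl, h2⟩
      · rfl
      · rw [mul_assoc] at h2; exact absurd (mul_eq_left.mp h2) hxx
    · rintro rfl; rfl
  have e1 (h : G) (q : G ⧸ Subgroup.zpowers x) :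
      ¬ (∃ a : G, (a : G ⧸ Subgroup.zpowers x) = q ∧ s(h, h * s) = s(a, a * x)) := by
    rintro ⟨a, -, ha⟩; exact c1 _ _ ha
  have e2 (h : G) (q : G ⧸ Subgroup.zpowers x) :
      (∃ a : G, (a : G ⧸ Subgroup.zpowers x) = q ∧ s(h, h * x) = s(a, a * x)) ↔
        (h : G ⧸ Subgroup.zpowers x) = q := by
    simp [c3]
  have e3 (h : G) (q : G ⧸ Subgroup.zpowers (s * x)) :
      (∃ a : G, (a : G ⧸ Subgroup.zpowers (s * x)) = q ∧
        (s(h, h * s) = s(a, a * s) ∨ s(h, h * s) = s(a * s, a * s * x))) ↔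
        ((h : G ⧸ Subgroup.zpowers (s * x)) = q ∨
          ((h * s : G) : G ⧸ Subgroup.zpowers (s * x)) = q) := by
    constructor
    · rintro ⟨a, ha, h1 | h1⟩
      · rcases (c2 _ _).mp h1 with rfl | rfl
        · exact Or.inl ha
        · exact Or.inr ha
      · exact absurd h1 (c1 _ _)
    · rintro (h1 | h1)
      · exact ⟨h, h1, Or.inl rfl⟩
      · exact ⟨_, h1, Or.inl ((c2 _ _).mpr (Or.inr rfl))⟩
  have e4 (h : G) (q : G ⧸ Subgroup.zpowers (s * x)) :
      (∃ a : G, (a : G ⧸ Subgroup.zpowers (s * x)) = q ∧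
        (s(h, h * x) = s(a, a * s) ∨ s(h, h * x) = s(a * s, a * s * x))) ↔
          ((h * s : G) : G ⧸ Subgroup.zpowers (s * x)) = q := by
    constructor
    · rintro ⟨a, ha, h1 | h1⟩
      · exact absurd h1.symm (c1 _ _)
      · have := (c3 _ _).mp h1
        rw [← this, has]; exact ha
    · intro h1
      exact ⟨_, h1, Or.inr (by rw [has])⟩
  have hne (h : G) : (h : G ⧸ Subgroup.zpowers (s * x)) ≠ ((h * s : G) : G ⧸ Subgroup.zpowers (s * x)) := by
    intro hh
    rw [QuotientGroup.eq] at hh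
    apply hsx
    simpa using hh
  constructor
  · intro l hl
    rw [cayleyCDC, Multiset.mem_add, Multiset.mem_map, Multiset.mem_map] at hl
    rcases hl with ⟨q, -, rfl⟩ | ⟨q, -, rfl⟩
    · refine ⟨by simp; omega, ?_, ?_⟩
      · refine List.Nodup.map_on ?_ List.nodup_range
        intro i hi j hj hij
        exact pow_injOn_Iio_orderOf (by simpa using hi) (by simpa using hj) (mul_left_cancel hij)
      · intro e he
        obtain ⟨a, -, rfl⟩ := (aux_x_edges x q e).mp he
        exact adj_x a
    · have hn : 2 ≤ orderOf (s * x) := by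
        have h0 := orderOf_pos (s * x)
        have h1 : orderOf (s * x) ≠ 1 := by rwa [Ne, orderOf_eq_one_iff]
        omega
      have hnot (g : G) (i j : ℕ) : g * (s * x) ^ i ≠ g * (s * x) ^ j * s := by
        intro hij
        apply hsx
        rw [mul_assoc] at hij
        have h2 := mul_left_cancel hij
        have : s = ((s * x) ^ j)⁻¹ * (s * x) ^ i := by rw [h2]; group
        have hm : ((s * x) ^ j)⁻¹ * (s * x) ^ i ∈ Subgroup.zpowers (s * x) :=
          Subgroup.mul_mem _ (Subgroup.inv_mem _ (Subgroup.npow_mem_zpowers _ _))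
          (Subgroup.npow_mem_zpowers _ _)
        rwa [← this] at hm
      refine ⟨?_, ?_, ?_⟩
      · rw [aux_flat]; simp; omega
      · rw [aux_flat]
        refine List.Nodup.map_on ?_ List.nodup_range
        intro i hi j hj hij
        rw [List.mem_range] at hi hj
        have inj : q.out * (s * x) ^ (i / 2) = q.out * (s * x) ^ (j / 2) → i / 2 = j / 2 :=
          fun h => pow_injOn_Iio_orderOf (by simp; omega) (by simp; omega) (mul_left_cancel h)
        split_ifs at hij with h1 h2 h2
        · have := inj hij; omega
        · exact absurd hij (hnot _ _ _)
        · exact absurd hij.symm (hnot _ _ _)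
        · have := inj (mul_right_cancel hij); omega
      · intro e he
        obtain ⟨a, -, rfl | rfl⟩ := (aux_alt_edges s x q e).mp he
        · exact adj_s a
        · exact adj_x _
  · intro e he
    rw [cayleyCDC, Multiset.map_add, Multiset.sum_add, Multiset.map_map, Multiset.map_map]
    simp only [Function.comp_def, aux_x_edges, aux_alt_edges]
    obtain ⟨h, rfl | rfl⟩ := edge_cases e he
    · simp only [e1, e3]
      have : ∀ q : G ⧸ Subgroup.zpowers (s * x),
        (if ((h : G ⧸ Subgroup.zpowers (s * x)) = q ∨
          ((h * s : G) : G ⧸ Subgroup.zpowers (s * x)) = q) then 1 else 0) =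
        (if (h : G ⧸ Subgroup.zpowers (s * x)) = q then 1 else 0) +
        (if ((h * s : G) : G ⧸ Subgroup.zpowers (s * x)) = q then 1 else 0) := by
        intro q
        by_cases h1 : (h : G ⧸ Subgroup.zpowers (s * x)) = q
        · have h2 : ((h * s : G) : G ⧸ Subgroup.zpowers (s * x)) ≠ q :=
            fun h2 => hne h (h1.trans h2.symm)
          simp [h1, h2]
        · simp [h1]
      simp only [this]
      change (∑ q : G ⧸ Subgroup.zpowers x, _) + (∑ q : G ⧸ Subgroup.zpowers (s * x), _) = 2
      rw [Finset.sum_add_distrib, Finset.sum_ite_eq, Finset.sum_ite_eq]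
      simp
    · simp only [e2, e4]
      change (∑ q : G ⧸ Subgroup.zpowers x, _) + (∑ q : G ⧸ Subgroup.zpowers (s * x), _) = 2
      rw [Finset.sum_ite_eq, Finset.sum_ite_eq]
      simp
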